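/- arXiv:1908.07403 — 2 statements merged into one kernel-verified Lean document; each statement's English description precedes it below -/
import Mathlib

section
/- Let A : ℝ → ℂ and f : ℝ → ℂ be smooth (infinitely differentiable) and fix x ∈ ℝ. With L_x f(x; h) the flux-form stencil L_x f(x; h) = (1/h²)·[ −(9/8)·A(x − h/2)·((1/24)f(x−2h) − (9/8)f(x−h) + (9/8)f(x) − (1/24)f(x+h)) + (1/24)·A(x − 3h/2)·(−(11/12)f(x−2h) + (17/24)f(x−h) + (3/8)f(x) − (5/24)f(x+h) + (1/24)f(x+2h)) − (1/24)·A(x + 3h/2)·(−(1/24)f(x−2h) + (5/24)f(x−h) − (3/8)f(x) − (17/24)f(x+h) + (11/12)f(x+2h)) + (9/8)·A(x + h/2)·((1/24)f(x−h) − (9/8)f(x) + (9/8)f(x+h) − (1/24)f(x+2h)) ], one has the explicit expansion L_x f(x; h) = (d/dx)(A·f′)(x) + h⁴·ζ(x) + O(h⁶) as h → 0⁺, where ζ = −(1/90)·A·f⁽⁶⁾ − (1/30)·A′·f⁽⁵⁾ − (3/64)·(A″·f⁽⁴⁾ + A‴·f⁽³⁾) − (3/128)·A⁽⁴⁾·f″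 − (3/640)·A⁽⁵⁾·f′ evaluated at x. -/
noncomputable section

/-- The flux-form fourth-order stencil `L_x f(x; h)` with coefficient `A`. -/
def Lx (A f : ℝ → ℂ) (x h : ℝ) : ℂ :=
  (1 / (h : ℂ) ^ 2) *
    ( -(9 / 8) * A (x - h / 2) *
        ((1 / 24) * f (x - 2 * h) - (9 / 8) * f (x - h) + (9 / 8) * f x
          - (1 / 24) * f (x + h))
      + (1 / 24) * A (x - 3 * h / 2) *
        (-(11 / 12) * f (x - 2 * h) + (17 / 24) * f (x - h) + (3 / 8) * f x
          - (5 / 24) * f (x + h) + (1 / 24) * f (x + 2 * h))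
      - (1 / 24) * A (x + 3 * h / 2) *
        (-(1 / 24) * f (x - 2 * h) + (5 / 24) * f (x - h) - (3 / 8) * f x
          - (17 / 24) * f (x + h) + (11 / 12) * f (x + 2 * h))
      + (9 / 8) * A (x + h / 2) *
        ((1 / 24) * f (x - h) - (9 / 8) * f x + (9 / 8) * f (x + h)
          - (1 / 24) * f (x + 2 * h)) )

/-- The explicit fourth-order error coefficient ζ of the flux-form stencil. -/
def zeta (A f : ℝ → ℂ) (x : ℝ) : ℂ :=
  -(1 / 90) * A x * iteratedDeriv 6 f x
    - (1 / 30) * deriv A x * iteratedDeriv 5 f x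
    - (3 / 64) * (iteratedDeriv 2 A x * iteratedDeriv 4 f x
        + iteratedDeriv 3 A x * iteratedDeriv 3 f x)
    - (3 / 128) * iteratedDeriv 4 A x * iteratedDeriv 2 f x
    - (3 / 640) * iteratedDeriv 5 A x * deriv f x

/-!
The bracket `h² L_x f(x; h)` is a finite sum of products `w A(x + a h) f(x + b h)`, hence a function
of `h` as smooth as `A` and `f`, and it is even because the stencil is symmetric about `x`. By the
Leibniz rule its derivatives at `h = 0` are combinations of the products `A⁽ᵖ⁾(x) f⁽ᵠ⁾(x)` whose
coefficients are the moments `∑ w aᵖ bᵠ` of the stencil. The moments of orders 0 and 4 vanish, those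
of order 2 give `(A f')'`, and those of order 6 give `ζ`. As odd orders drop out by parity, Taylor's
theorem leaves a remainder `O(h⁸)`, which becomes `O(h⁶)` after division by `h²`.
-/

open Asymptotics Filter Topology Finset
open scoped Nat

section Calculus

variable {𝕜 E : Type*} [NontriviallyNormedField 𝕜] [NormedAddCommGroup E]

theorem iteratedDeriv_comp_mul_left [NormedSpace 𝕜 E] (n : ℕ) (g : 𝕜 → E) (c : 𝕜) :
    iteratedDeriv n (fun h ↦ g (c * h)) = fun h ↦ c ^ n • iteratedDeriv n g (c * h) := by
  induction n with
  | zero => simp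
  | succ n ih =>
    ext h
    rw [iteratedDeriv_succ, ih, deriv_fun_const_smul_field,
      deriv_comp_mul_left c (iteratedDeriv n g), smul_smul, pow_succ, iteratedDeriv_succ]

theorem iteratedDeriv_comp_const_add_mul_zero [NormedSpace 𝕜 E] (n : ℕ) (g : 𝕜 → E) (x c : 𝕜) :
    iteratedDeriv n (fun h ↦ g (x + c * h)) 0 = c ^ n • iteratedDeriv n g x := by
  rw [iteratedDeriv_comp_mul_left n (fun y ↦ g (x + y)), iteratedDeriv_comp_const_add]
  simp

theorem contDiffAt_comp_const_add_mul_zero [NormedSpace 𝕜 E] {n : WithTop ℕ∞} {g : 𝕜 → E} {x : 𝕜}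
    (hg : ContDiffAt 𝕜 n g x) (c : 𝕜) : ContDiffAt 𝕜 n (fun h ↦ g (x + c * h)) 0 :=
  ContDiffAt.comp (g := g) 0 (by simpa using hg) (by fun_prop)

theorem iteratedDeriv_zero_eq_zero_of_even_of_odd [CharZero 𝕜] [NormedSpace 𝕜 E] {g : 𝕜 → E}
    {n : ℕ} (hg : Function.Even g) (hn : Odd n) : iteratedDeriv n g 0 = 0 := by
  have hneg : iteratedDeriv n g 0 = -iteratedDeriv n g 0 := by
    simpa [hg _, hn.neg_one_pow] using iteratedDeriv_comp_neg n g 0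
  have : IsAddTorsionFree E := .of_isTorsionFree 𝕜 E
  exact self_eq_neg.mp hneg

theorem deriv_mul_deriv_eq {𝔸 : Type*} [NormedRing 𝔸] [NormedAlgebra 𝕜 𝔸] {A f : 𝕜 → 𝔸} {x : 𝕜}
    (hA : DifferentiableAt 𝕜 A x) (hf : ContDiffAt 𝕜 2 f x) :
    deriv (fun t ↦ A t * deriv f t) x = deriv A x * deriv f x + A x * iteratedDeriv 2 f x := by
  have hf' : DifferentiableAt 𝕜 (deriv f) x :=
    (hf.derivWithin (m := 1) (by norm_num)).differentiableAt (by norm_num)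
  rw [deriv_fun_mul hA hf', iteratedDeriv_succ, iteratedDeriv_one]

theorem taylor_isBigO_of_contDiffAt [NormedSpace ℝ E] {g : ℝ → E} {x₀ : ℝ} {n : ℕ}
    (hg : ContDiffAt ℝ n g x₀) :
    (fun x ↦ g x - ∑ k ∈ range n, ((x - x₀) ^ k / k !) • iteratedDeriv k g x₀)
      =O[𝓝 x₀] fun x ↦ (x - x₀) ^ n := by
  obtain ⟨u, hu, hgu⟩ := hg.contDiffOn le_rfl (by simp)
  obtain ⟨ε, hε, hball⟩ := Metric.mem_nhds_iff.mp hu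
  have hx₀ : x₀ ∈ Metric.ball x₀ ε := Metric.mem_ball_self hε
  have htaylor := (taylor_isLittleO (convex_ball x₀ ε) hx₀ (hgu.mono hball)).isBigO
  rw [Metric.isOpen_ball.nhdsWithin_eq hx₀] at htaylor
  have hlast : (fun x ↦ ((x - x₀) ^ n / n !) • iteratedDeriv n g x₀)
      =O[𝓝 x₀] fun x ↦ (x - x₀) ^ n :=
    IsBigO.of_bound (‖iteratedDeriv n g x₀‖ / n !) <| .of_forall fun x ↦ by
      simp only [norm_smul, norm_div, RCLike.norm_natCast]
      exact le_of_eq (by ring)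
  refine (htaylor.add hlast).congr_left fun x ↦ ?_
  simp only [taylor_within_apply, iteratedDerivWithin_of_isOpen Metric.isOpen_ball hx₀,
    sum_range_succ, ← div_eq_inv_mul]
  abel

theorem taylor_isBigO_of_even [NormedSpace ℝ E] {g : ℝ → E} {m : ℕ} (heven : Function.Even g)
    (hg : ContDiffAt ℝ (2 * m : ℕ) g 0) :
    (fun h ↦ g h - ∑ k ∈ range m, (h ^ (2 * k) / (2 * k)!) • iteratedDeriv (2 * k) g 0)
      =O[𝓝 0] fun h ↦ h ^ (2 * m) := by
  have hodd (k : ℕ) : iteratedDeriv (2 * k + 1) g 0 = 0 :=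
    iteratedDeriv_zero_eq_zero_of_even_of_odd heven (odd_two_mul_add_one k)
  have hsum (h : ℝ) : ∑ k ∈ range (2 * m), (h ^ k / k !) • iteratedDeriv k g 0 =
      ∑ k ∈ range m, (h ^ (2 * k) / (2 * k)!) • iteratedDeriv (2 * k) g 0 := by
    clear hg
    induction m with
    | zero => simp
    | succ m ih => rw [mul_add_one, sum_range_succ, sum_range_succ, ih, hodd, smul_zero, add_zero,
        sum_range_succ]
  simpa only [sub_zero, hsum] using taylor_isBigO_of_contDiffAt hg

theorem exists_forall_norm_le_mul_pow_of_isBigO {g : ℝ → E} {n : ℕ}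
    (hg : g =O[𝓝[>] 0] fun h ↦ h ^ n) :
    ∃ C δ : ℝ, 0 < C ∧ 0 < δ ∧ ∀ h : ℝ, 0 < h → h < δ → ‖g h‖ ≤ C * h ^ n := by
  obtain ⟨C, hC, hbound⟩ := hg.exists_pos
  obtain ⟨δ, hδ, hsub⟩ := mem_nhdsGT_iff_exists_Ioo_subset.mp hbound.bound
  refine ⟨C, δ, hC, hδ, fun h hpos hlt ↦ ?_⟩
  simpa [abs_of_pos hpos] using hsub ⟨hpos, hlt⟩

end Calculus

section ProductStencil

variable {ι κ 𝕜 𝔸 : Type*} [Fintype ι] [Fintype κ] [NontriviallyNormedField 𝕜] [NormedRing 𝔸]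
  [NormedAlgebra 𝕜 𝔸] (w : ι → κ → 𝕜) (a : ι → 𝕜) (b : κ → 𝕜) {A f : 𝕜 → 𝔸} {x : 𝕜} {n : ℕ}

/-- The stencil with weights `w` which samples `A` at the nodes `x + a i * h` and `f` at the nodes
`x + b j * h`. It is not divided by any power of the step `h`. -/
def productStencil (A f : 𝕜 → 𝔸) (x h : 𝕜) : 𝔸 :=
  ∑ i, ∑ j, w i j • (A (x + a i * h) * f (x + b j * h))

/-- The moment of bidegree `(p, q)` of the weights `w` on the nodes `a` and `b`: up to a
binomial factor, the coefficient of `A⁽ᵖ⁾ f⁽ᵠ⁾` in the derivatives of `productStencil`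
at step `0`. -/
def stencilMoment (p q : ℕ) : 𝕜 :=
  ∑ i, ∑ j, w i j * (a i ^ p * b j ^ q)

theorem productStencil_zero (A f : 𝕜 → 𝔸) (x : 𝕜) :
    productStencil w a b A f x 0 = stencilMoment w a b 0 0 • (A x * f x) := by
  simp [productStencil, stencilMoment, sum_smul]

variable {w a b} in
theorem productStencil_even (σ : Equiv.Perm ι) (τ : Equiv.Perm κ) (ha : ∀ i, a (σ i) = -a i)
    (hb : ∀ j, b (τ j) = -b j) (hw : ∀ i j, w (σ i) (τ j) = w i j) :
    Function.Even (productStencil w a b A f x) := fun h ↦ by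
  rw [productStencil, ← Equiv.sum_comp σ]
  refine sum_congr rfl fun i _ ↦ ?_
  rw [← Equiv.sum_comp τ]
  simp only [ha, hb, hw, neg_mul_neg]

theorem contDiffAt_mul_comp_const_add_mul_zero {r : WithTop ℕ∞} (hA : ContDiffAt 𝕜 r A x)
    (hf : ContDiffAt 𝕜 r f x) (s t : 𝕜) :
    ContDiffAt 𝕜 r (fun h ↦ A (x + s * h) * f (x + t * h)) 0 :=
  (contDiffAt_comp_const_add_mul_zero hA s).mul (contDiffAt_comp_const_add_mul_zero hf t)

theorem contDiffAt_productStencil {r : WithTop ℕ∞} (hA : ContDiffAt 𝕜 r A x)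
    (hf : ContDiffAt 𝕜 r f x) : ContDiffAt 𝕜 r (productStencil w a b A f x) 0 :=
  .sum fun i _ ↦ .sum fun j _ ↦
    (contDiffAt_mul_comp_const_add_mul_zero hA hf (a i) (b j)).const_smul (w i j)

theorem iteratedDeriv_mul_comp_const_add_mul_zero (hA : ContDiffAt 𝕜 n A x)
    (hf : ContDiffAt 𝕜 n f x) (s t : 𝕜) :
    iteratedDeriv n (fun h ↦ A (x + s * h) * f (x + t * h)) 0 =
      ∑ p ∈ range (n + 1), (n.choose p * (s ^ p * t ^ (n - p))) •
        (iteratedDeriv p A x * iteratedDeriv (n - p) f x) := by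
  refine (iteratedDeriv_mul (contDiffAt_comp_const_add_mul_zero hA s)
    (contDiffAt_comp_const_add_mul_zero hf t)).trans (sum_congr rfl fun p _ ↦ ?_)
  rw [iteratedDeriv_comp_const_add_mul_zero, iteratedDeriv_comp_const_add_mul_zero, mul_assoc,
    smul_mul_smul_comm, ← nsmul_eq_mul, ← Nat.cast_smul_eq_nsmul 𝕜, smul_smul]

theorem iteratedDeriv_productStencil_zero (hA : ContDiffAt 𝕜 n A x) (hf : ContDiffAt 𝕜 n f x) :
    iteratedDeriv n (productStencil w a b A f x) 0 =
      ∑ p ∈ range (n + 1), (n.choose p * stencilMoment w a b p (n - p)) •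
        (iteratedDeriv p A x * iteratedDeriv (n - p) f x) := by
  have hsmooth (i : ι) (j : κ) :
      ContDiffAt 𝕜 n (fun h ↦ A (x + a i * h) * f (x + b j * h)) 0 :=
    contDiffAt_mul_comp_const_add_mul_zero hA hf (a i) (b j)
  calc iteratedDeriv n (productStencil w a b A f x) 0
    _ = ∑ i, ∑ j, w i j • iteratedDeriv n (fun h ↦ A (x + a i * h) * f (x + b j * h)) 0 := by
      unfold productStencil
      rw [iteratedDeriv_fun_sum fun i _ ↦ .sum fun j _ ↦ (hsmooth i j).const_smul _]
      refine sum_congr rfl fun i _ ↦ ?_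
      rw [iteratedDeriv_fun_sum fun j _ ↦ (hsmooth i j).const_smul _]
      simp only [iteratedDeriv_fun_const_smul_field]
    _ = ∑ p ∈ range (n + 1), ∑ i, ∑ j, (n.choose p * (w i j * (a i ^ p * b j ^ (n - p)))) •
          (iteratedDeriv p A x * iteratedDeriv (n - p) f x) := by
      simp only [iteratedDeriv_mul_comp_const_add_mul_zero hA hf, smul_sum, smul_smul,
        mul_left_comm]
      rw [sum_comm_cycle]
    _ = _ := by simp only [stencilMoment, mul_sum, sum_smul]

end ProductStencil

section FluxStencil

/-- The nodes `x ± h/2`, `x ± 3h/2` at which the flux stencil samples `A`, in units of `h`. -/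
def fluxNode : Fin 4 → ℝ := ![-3 / 2, -1 / 2, 1 / 2, 3 / 2]

/-- The nodes `x`, `x ± h`, `x ± 2h` at which the flux stencil samples `f`, in units of `h`. -/
def gridNode : Fin 5 → ℝ := ![-2, -1, 0, 1, 2]

/-- The weights of the flux stencil: the rows of the matrix approximate `h f'` at the nodes
`fluxNode`, and the vector is the staggered difference applied to the resulting fluxes. -/
def fluxWeight (i : Fin 4) (j : Fin 5) : ℝ :=
  ![1 / 24, -9 / 8, 9 / 8, -1 / 24] i *
    !![-11 / 12, 17 / 24, 3 / 8, -5 / 24, 1 / 24;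
       1 / 24, -9 / 8, 9 / 8, -1 / 24, 0;
       0, 1 / 24, -9 / 8, 9 / 8, -1 / 24;
       -1 / 24, 5 / 24, -3 / 8, -17 / 24, 11 / 12] i j

/-- The flux stencil before division by `h²`. -/
abbrev fluxStencil (A f : ℝ → ℂ) (x h : ℝ) : ℂ :=
  productStencil fluxWeight fluxNode gridNode A f x h

theorem Lx_eq_inv_sq_mul_fluxStencil (A f : ℝ → ℂ) (x h : ℝ) :
    Lx A f x h = ((h : ℂ) ^ 2)⁻¹ * fluxStencil A f x h := by
  simp only [Lx, productStencil, fluxWeight, fluxNode, gridNode, Fin.sum_univ_four,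
    Fin.sum_univ_five, Matrix.of_apply, Matrix.cons_val, Complex.real_smul]
  push_cast
  ring_nf

theorem fluxStencil_even (A f : ℝ → ℂ) (x : ℝ) : Function.Even (fluxStencil A f x) := by
  refine productStencil_even Fin.revPerm Fin.revPerm ?_ ?_ ?_
  · intro i; fin_cases i <;> norm_num [fluxNode, Fin.rev]
  · intro i; fin_cases i <;> norm_num [gridNode, Fin.rev]
  · intro i j; fin_cases i <;> fin_cases j <;> norm_num [fluxWeight, Fin.rev]

theorem stencilMoment_flux_zero_zero : stencilMoment fluxWeight fluxNode gridNode 0 0 = 0 := by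
  norm_num [stencilMoment, fluxWeight, Fin.sum_univ_succ]

theorem stencilMoment_flux_of_order_two (p : Fin 3) :
    stencilMoment fluxWeight fluxNode gridNode p (2 - p) = ![2, 1, 0] p := by
  fin_cases p <;>
    norm_num [stencilMoment, fluxWeight, fluxNode, gridNode, Fin.sum_univ_succ]

theorem stencilMoment_flux_of_order_four (p : Fin 5) :
    stencilMoment fluxWeight fluxNode gridNode p (4 - p) = 0 := by
  fin_cases p <;>
    norm_num [stencilMoment, fluxWeight, fluxNode, gridNode, Fin.sum_univ_succ]

theorem stencilMoment_flux_of_order_six (p : Fin 7) :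
    stencilMoment fluxWeight fluxNode gridNode p (6 - p) =
      ![-8, -4, -9 / 4, -27 / 16, -9 / 8, -9 / 16, 0] p := by
  fin_cases p <;>
    norm_num [stencilMoment, fluxWeight, fluxNode, gridNode, Fin.sum_univ_succ]

theorem fluxStencil_zero (A f : ℝ → ℂ) (x : ℝ) : fluxStencil A f x 0 = 0 := by
  rw [fluxStencil, productStencil_zero, stencilMoment_flux_zero_zero, zero_smul]

variable {A f : ℝ → ℂ} {x : ℝ}

theorem iteratedDeriv_two_fluxStencil (hA : ContDiffAt ℝ 2 A x) (hf : ContDiffAt ℝ 2 f x) :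
    iteratedDeriv 2 (fluxStencil A f x) 0 = 2 ! * deriv (fun t ↦ A t * deriv f t) x := by
  rw [iteratedDeriv_productStencil_zero _ _ _ hA hf, sum_range,
    deriv_mul_deriv_eq (hA.differentiableAt (by norm_num)) hf]
  simp only [stencilMoment_flux_of_order_two, Fin.sum_univ_three, Fin.coe_ofNat_eq_mod,
    Nat.reduceAdd, Nat.reduceMod, Nat.reduceSub, Nat.choose, Nat.factorial, Matrix.cons_val,
    iteratedDeriv_zero, iteratedDeriv_one, Complex.real_smul]
  push_cast
  ring

theorem iteratedDeriv_four_fluxStencil (hA : ContDiffAt ℝ 4 A x) (hf : ContDiffAt ℝ 4 f x) :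
    iteratedDeriv 4 (fluxStencil A f x) 0 = 0 := by
  rw [iteratedDeriv_productStencil_zero _ _ _ hA hf, sum_range]
  simp only [stencilMoment_flux_of_order_four, mul_zero, zero_smul, sum_const_zero]

theorem iteratedDeriv_six_fluxStencil (hA : ContDiffAt ℝ 6 A x) (hf : ContDiffAt ℝ 6 f x) :
    iteratedDeriv 6 (fluxStencil A f x) 0 = 6 ! * zeta A f x := by
  rw [iteratedDeriv_productStencil_zero _ _ _ hA hf, sum_range]
  simp only [stencilMoment_flux_of_order_six, Fin.sum_univ_seven, Fin.coe_ofNat_eq_mod,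
    Nat.reduceAdd, Nat.reduceMod, Nat.reduceSub, Nat.choose, Nat.factorial, Matrix.cons_val,
    iteratedDeriv_zero, iteratedDeriv_one, Complex.real_smul, zeta]
  push_cast
  ring

theorem fluxStencil_isBigO (hA : ContDiffAt ℝ 8 A x) (hf : ContDiffAt ℝ 8 f x) :
    (fun h : ℝ ↦ fluxStencil A f x h -
        ((h : ℂ) ^ 2 * deriv (fun t ↦ A t * deriv f t) x + (h : ℂ) ^ 6 * zeta A f x))
      =O[𝓝 0] fun h ↦ h ^ 8 := by
  have htaylor := taylor_isBigO_of_even (m := 4) (fluxStencil_even A f x)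
    (contDiffAt_productStencil fluxWeight fluxNode gridNode hA hf)
  have h2 := iteratedDeriv_two_fluxStencil (hA.of_le (by norm_num)) (hf.of_le (by norm_num))
  have h4 := iteratedDeriv_four_fluxStencil (hA.of_le (by norm_num)) (hf.of_le (by norm_num))
  have h6 := iteratedDeriv_six_fluxStencil (hA.of_le (by norm_num)) (hf.of_le (by norm_num))
  refine htaylor.congr_left fun h ↦ congrArg (fluxStencil A f x h - ·) ?_
  simp only [sum_range_succ, sum_range_zero, Nat.reduceMul, iteratedDeriv_zero, fluxStencil_zero,
    h2, h4, h6, Nat.factorial, Complex.real_smul]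
  push_cast
  ring

end FluxStencil

theorem flux_stencil_expansion_general {A f : ℝ → ℂ} {x : ℝ} (hA : ContDiffAt ℝ 8 A x)
    (hf : ContDiffAt ℝ 8 f x) :
    (fun h : ℝ ↦ Lx A f x h - (deriv (fun t ↦ A t * deriv f t) x + (h : ℂ) ^ 4 * zeta A f x))
      =O[𝓝[≠] 0] fun h ↦ h ^ 6 := by
  have hinv : (fun h : ℝ ↦ ((h : ℂ) ^ 2)⁻¹) =O[𝓝[≠] 0] fun h ↦ (h ^ 2)⁻¹ :=
    .of_norm_eventuallyLE <| .of_forall fun h ↦ by simp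
  refine (hinv.mul ((fluxStencil_isBigO hA hf).mono nhdsWithin_le_nhds)).congr' ?_ ?_
  · filter_upwards [self_mem_nhdsWithin] with h hh
    have hh : (h : ℂ) ≠ 0 := Complex.ofReal_ne_zero.mpr hh
    rw [Lx_eq_inv_sq_mul_fluxStencil]
    field_simp
  · filter_upwards [self_mem_nhdsWithin] with h hh
    have hh : h ≠ 0 := hh
    field_simp

/-- explicit expansion L_x f(x;h) = (A f')'(x) + h⁴ ζ(x) + O(h⁶). -/
theorem flux_stencil_expansion
    (A f : ℝ → ℂ) (hA : ContDiff ℝ (⊤ : ℕ∞) A) (hf : ContDiff ℝ (⊤ : ℕ∞) f) (x : ℝ) :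
    ∃ C δ : ℝ, 0 < C ∧ 0 < δ ∧ ∀ h : ℝ, 0 < h → h < δ →
      ‖Lx A f x h - (deriv (fun t => A t * deriv f t) x + (h : ℂ) ^ 4 * zeta A f x)‖
        ≤ C * h ^ 6 := by
  exact exists_forall_norm_le_mul_pow_of_isBigO <|
    (flux_stencil_expansion_general (contDiff_infty.mp hA 8).contDiffAt
      (contDiff_infty.mp hf 8).contDiffAt).mono (nhdsGT_le_nhdsNE 0)

end
end

section
/- Fix γ > 0 and parameters d₁, d₂, d₃ with d₁ + d₂ + d₃ = 1. Let Q : ℝ² → ℂ be smooth (infinitely differentiable) and fix (x, z) ∈ ℝ². Define ĨQ(x, z; h) = d₁·Q(x, z) + d₂·I⁽²⁾Q(x, z; h) + d₃·I⁽³⁾Q(x, z; h), where I⁽²⁾Q = (1/3)·[Q(x−h, z) + Q(x+h, z) + Q(x, z−γh) + Q(x, z+γh)] − (1/12)·[Q(x−2h, z) + Q(x+2h, z) + Q(x, z−2γh) + Q(x, z+2γh)] and I⁽³⁾Q = (1/3)·[Q(x−h, z−γh) + Q(x+h, z+γh) + Q(x−h, z+γh) + Q(x+h, z−γh)] − (1/12)·[Q(x−2h,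 z−2γh) + Q(x+2h, z+2γh) + Q(x−2h, z+2γh) + Q(x+2h, z−2γh)]. Then ĨQ(x, z; h) = Q(x, z) − h⁴·[((d₂ + 2d₃)/12)·(∂⁴Q/∂x⁴ + γ⁴·∂⁴Q/∂z⁴) + d₃·γ²·∂⁴Q/∂x²∂z²](x, z) + O(h⁶) as h → 0⁺. -/
noncomputable section

/-- The orthogonal-neighbor mass-lumping operator `I⁽²⁾`. -/
def I2 (γ : ℝ) (Q : ℝ × ℝ → ℂ) (x z h : ℝ) : ℂ :=
  (1 / 3) * (Q (x - h, z) + Q (x + h, z) + Q (x, z - γ * h) + Q (x, z + γ * h))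
    - (1 / 12) * (Q (x - 2 * h, z) + Q (x + 2 * h, z)
        + Q (x, z - 2 * γ * h) + Q (x, z + 2 * γ * h))

/-- The diagonal-neighbor mass-lumping operator `I⁽³⁾`. -/
def I3 (γ : ℝ) (Q : ℝ × ℝ → ℂ) (x z h : ℝ) : ℂ :=
  (1 / 3) * (Q (x - h, z - γ * h) + Q (x + h, z + γ * h)
      + Q (x - h, z + γ * h) + Q (x + h, z - γ * h))
    - (1 / 12) * (Q (x - 2 * h, z - 2 * γ * h) + Q (x + 2 * h, z + 2 * γ * h)
        + Q (x - 2 * h, z + 2 * γ * h) + Q (x + 2 * h, z - 2 * γ * h))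

/-- The weighted mass-lumping operator `Ĩ` of the point-weighting 17-point scheme. -/
def Itilde (γ d₁ d₂ d₃ : ℝ) (Q : ℝ × ℝ → ℂ) (x z h : ℝ) : ℂ :=
  (d₁ : ℂ) * Q (x, z) + (d₂ : ℂ) * I2 γ Q x z h + (d₃ : ℂ) * I3 γ Q x z h

/-- ∂⁴Q/∂x⁴ at (x, z). -/
def Dx4 (Q : ℝ × ℝ → ℂ) (x z : ℝ) : ℂ := iteratedDeriv 4 (fun t => Q (t, z)) x

/-- ∂⁴Q/∂z⁴ at (x, z). -/
def Dz4 (Q : ℝ × ℝ → ℂ) (x z : ℝ) : ℂ := iteratedDeriv 4 (fun t => Q (x, t)) z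

/-- ∂⁴Q/∂x²∂z² at (x, z). -/
def Dx2z2 (Q : ℝ × ℝ → ℂ) (x z : ℝ) : ℂ :=
  iteratedDeriv 2 (fun t => iteratedDeriv 2 (fun s => Q (t, s)) z) x

/-!
Both lumping operators are sums of one four-point stencil `S` along lines through `(x, z)`: `I⁽²⁾`
uses the directions `(1, 0)`, `(0, γ)` and `I⁽³⁾` the diagonals `(1, ±γ)`. In `S` the odd Taylor
terms cancel by symmetry and the quadratic one by the choice of weights, so
`S = Q / 2 - (h⁴ / 12) ∂_v⁴ Q + O(h⁶)` along `v`. Directional derivatives of smooth functions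
commute and are linear in `v`, so the two diagonal contributions combine through
`(a + b)⁴ + (a - b)⁴ = 2a⁴ + 12a²b² + 2b⁴`, which is where the mixed derivative comes from.
-/

open Asymptotics Filter Topology
open scoped ContDiff Nat

section DirectionalDerivatives

variable {E F : Type*} [NormedAddCommGroup E] [NormedSpace ℝ E]
  [NormedAddCommGroup F] [NormedSpace ℝ F]

variable (E F) in
/-- The space `C^∞(E, F)`. It is stable under directional derivatives, which makes polynomials in
them elements of the ring `Module.End ℝ (smoothMaps E F)`. -/
def smoothMaps : Submodule ℝ (E → F) where
  carrier := {f | ContDiff ℝ ∞ f}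
  add_mem' (hf : ContDiff ℝ ∞ _) (hg : ContDiff ℝ ∞ _) := hf.add hg
  zero_mem' := (contDiff_zero_fun : ContDiff ℝ ∞ fun _ : E ↦ (0 : F))
  smul_mem' c _ (hf : ContDiff ℝ ∞ _) := hf.const_smul c

namespace smoothMaps

instance : CoeFun (smoothMaps E F) fun _ ↦ E → F :=
  ⟨Subtype.val⟩

variable (f : smoothMaps E F)

theorem contDiff : ContDiff ℝ ∞ f :=
  f.2

theorem differentiable : Differentiable ℝ f :=
  (contDiff f).differentiable (by simp)

theorem contDiff_fderiv : ContDiff ℝ ∞ (fderiv ℝ f) :=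
  (contDiff f).fderiv_right (by simp)

end smoothMaps

open smoothMaps

/-- The directional derivative `∂_v` as an operator on `C^∞(E, F)`, depending linearly on `v`. -/
def dirDeriv : E →ₗ[ℝ] Module.End ℝ (smoothMaps E F) :=
  LinearMap.mk₂ ℝ (fun v f ↦ ⟨fun p ↦ fderiv ℝ f p v, (contDiff_fderiv f).clm_apply contDiff_const⟩)
    (fun v w f ↦ by ext p; simp)
    (fun c v f ↦ by ext p; simp)
    (fun v f g ↦ by ext p; simp [fderiv_add (differentiable f p) (differentiable g p)])
    (fun c v f ↦ by ext p; simp [fderiv_const_smul (differentiable f p)])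

theorem dirDeriv_dirDeriv_apply (v w : E) (f : smoothMaps E F) (p : E) :
    dirDeriv v (dirDeriv w f) p = fderiv ℝ (fderiv ℝ f) p v w := by
  have hf' : DifferentiableAt ℝ (fderiv ℝ f) p :=
    (contDiff_fderiv f).differentiable (by simp) p
  change fderiv ℝ (fun q ↦ fderiv ℝ f q w) p v = _
  simp [fderiv_clm_apply hf' (differentiableAt_const w)]

theorem commute_dirDeriv (v w : E) :
    Commute (dirDeriv v : Module.End ℝ (smoothMaps E F)) (dirDeriv w) := by
  ext f p
  have hsymm : IsSymmSndFDerivAt ℝ f p :=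
    (contDiff_infty.1 (contDiff f) 2).contDiffAt.isSymmSndFDerivAt (by simp)
  simp only [Module.End.mul_apply, dirDeriv_dirDeriv_apply, hsymm.eq v w]

theorem iteratedDeriv_comp_add_smul (n : ℕ) (f : smoothMaps E F) (p v : E) (t : ℝ) :
    iteratedDeriv n (fun s : ℝ ↦ f (p + s • v)) t = (dirDeriv v ^ n) f (p + t • v) := by
  induction n generalizing f with
  | zero => simp
  | succ n ih =>
    have hline (s : ℝ) : HasDerivAt (fun s : ℝ ↦ p + s • v) v s := by
      simpa using ((hasDerivAt_id s).smul_const v).const_add p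
    have hderiv : deriv (fun s : ℝ ↦ f (p + s • v)) = fun s ↦ dirDeriv v f (p + s • v) := by
      ext s
      exact ((differentiable f _).hasFDerivAt.comp_hasDerivAt s (hline s)).deriv
    rw [iteratedDeriv_succ', hderiv, ih, pow_succ, Module.End.mul_apply]

theorem iteratedDeriv_comp_prodMk_right (n : ℕ) (f : smoothMaps (ℝ × E) F) (x : ℝ) (y : E) :
    iteratedDeriv n (fun t ↦ f (t, y)) x = (dirDeriv (1, 0) ^ n) f (x, y) := by
  simpa using iteratedDeriv_comp_add_smul n f (0, y) (1, 0) x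

theorem iteratedDeriv_comp_prodMk_left (n : ℕ) (f : smoothMaps (E × ℝ) F) (x : E) (y : ℝ) :
    iteratedDeriv n (fun t ↦ f (x, t)) y = (dirDeriv (0, 1) ^ n) f (x, y) := by
  simpa using iteratedDeriv_comp_add_smul n f (x, 0) (0, 1) y

theorem dirDeriv_zero_prodMk (c : ℝ) :
    (dirDeriv (0, c) : Module.End ℝ (smoothMaps (E × ℝ) F)) = c • dirDeriv (0, 1) := by
  rw [← map_smul, Prod.smul_mk, smul_zero, smul_eq_mul, mul_one]

theorem add_pow_four_add_sub_pow_four {R : Type*} [Ring R] {a b : R} (hab : Commute a b) :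
    (a + b) ^ 4 + (a - b) ^ 4 = 2 • a ^ 4 + 12 • (a ^ 2 * b ^ 2) + 2 • b ^ 4 := by
  rw [sub_eq_add_neg, hab.add_pow, hab.neg_right.add_pow]
  simp only [Finset.sum_range_succ, Finset.sum_range_zero, Nat.choose, Nat.reduceAdd,
    Nat.cast_one, Nat.cast_ofNat, Nat.sub_self, pow_zero]
  noncomm_ring

theorem dirDeriv_add_pow_four_add_dirDeriv_sub_pow_four (v w : E) (f : smoothMaps E F) (p : E) :
    (dirDeriv (v + w) ^ 4) f p + (dirDeriv (v - w) ^ 4) f p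
      = 2 • (dirDeriv v ^ 4) f p + 12 • (dirDeriv v ^ 2) ((dirDeriv w ^ 2) f) p
        + 2 • (dirDeriv w ^ 4) f p := by
  have hpow := add_pow_four_add_sub_pow_four (R := Module.End ℝ (smoothMaps E F))
    (commute_dirDeriv v w)
  rw [map_add, map_sub]
  exact congrArg (fun T : Module.End ℝ (smoothMaps E F) ↦ T f p) hpow

end DirectionalDerivatives

theorem exists_norm_le_of_isBigO_pow {F : Type*} [NormedAddCommGroup F] {f : ℝ → F} {n : ℕ}
    (hf : f =O[𝓝[>] 0] fun h ↦ h ^ n) :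
    ∃ C δ : ℝ, 0 < C ∧ 0 < δ ∧ ∀ h : ℝ, 0 < h → h < δ → ‖f h‖ ≤ C * h ^ n := by
  obtain ⟨C, hC, hbound⟩ := hf.exists_pos
  obtain ⟨δ, hδ, hsub⟩ := mem_nhdsGT_iff_exists_Ioo_subset.1 hbound.bound
  refine ⟨C, δ, hC, hδ, fun h h0 h1 ↦ ?_⟩
  simpa [abs_of_pos h0] using hsub ⟨h0, h1⟩

section Stencil

variable {E F : Type*} [NormedAddCommGroup E] [NormedSpace ℝ E]
  [NormedAddCommGroup F] [NormedSpace ℝ F]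

theorem sub_sum_taylor_isBigO {f : ℝ → F} {n : ℕ} (hf : ContDiff ℝ (n + 1) f) (x : ℝ) :
    (fun t ↦ f (x + t) - ∑ k ∈ Finset.range (n + 1), (t ^ k / k !) • iteratedDeriv k f x)
      =O[𝓝 0] fun t ↦ t ^ (n + 1) := by
  have hshift : Tendsto (x + ·) (𝓝 0) (𝓝 x) := by
    simpa using (continuous_const_add x).tendsto 0
  have hrem : (fun t ↦ f (x + t) - taylorWithinEval f (n + 1) .univ x (x + t))
      =O[𝓝 0] fun t ↦ t ^ (n + 1) := by
    simpa only [Function.comp_def, add_sub_cancel_left] using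
      ((taylor_isLittleO_univ (mod_cast hf)).comp_tendsto hshift).isBigO
  have hlast : (fun t : ℝ ↦ (t ^ (n + 1) / (n + 1)!) • iteratedDeriv (n + 1) f x)
      =O[𝓝 0] fun t ↦ t ^ (n + 1) := by
    refine .of_bound (‖iteratedDeriv (n + 1) f x‖ / ‖((n + 1)! : ℝ)‖)
      (.of_forall fun t ↦ le_of_eq ?_)
    rw [norm_smul, norm_div]
    ring
  refine (hrem.add hlast).congr_left fun t ↦ ?_
  simp only [taylor_within_apply, Finset.sum_range_succ _ (n + 1), iteratedDerivWithin_univ,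
    add_sub_cancel_left, div_eq_inv_mul]
  abel

/-- The combination of the values of `f` at `p ± v` and `p ± 2v` from which the mass-lumping
operators are built; its weights annihilate the second-order Taylor term. -/
def lumpingStencil (f : E → F) (p v : E) : F :=
  (1 / 3 : ℝ) • (f (p - v) + f (p + v))
    - (1 / 12 : ℝ) • (f (p - (2 : ℝ) • v) + f (p + (2 : ℝ) • v))

theorem lumpingStencil_sub_isBigO {f : ℝ → F} (hf : ContDiff ℝ 6 f) (x : ℝ) :
    (fun h ↦ lumpingStencil f x h
        - ((1 / 2 : ℝ) • f x - (h ^ 4 / 12) • iteratedDeriv 4 f x)) =O[𝓝 0] fun h ↦ h ^ 6 := by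
  let r : ℝ → F := fun t ↦
    f (x + t) - ∑ k ∈ Finset.range 6, (t ^ k / k !) • iteratedDeriv k f x
  have hrem (c : ℝ) : (fun h ↦ r (c * h)) =O[𝓝 0] fun h ↦ h ^ 6 := by
    have hscale : Tendsto (c * ·) (𝓝 0) (𝓝 0) := by
      simpa using (continuous_const_mul c).tendsto 0
    refine ((sub_sum_taylor_isBigO (n := 5) (mod_cast hf) x).comp_tendsto hscale).trans ?_
    simpa only [Function.comp_def, mul_pow] using isBigO_const_mul_self (c ^ 6) _ _
  refine ((((hrem (-1)).add (hrem 1)).const_smul_left (1 / 3 : ℝ)).sub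
    (((hrem (-2)).add (hrem 2)).const_smul_left (1 / 12 : ℝ))).congr_left fun h ↦ ?_
  have hpoints : x + -1 * h = x - h ∧ x + -2 * h = x - 2 * h := by constructor <;> ring
  simp only [r, Pi.smul_apply, lumpingStencil, Finset.sum_range_succ, Finset.sum_range_zero,
    iteratedDeriv_zero, hpoints, one_mul, smul_eq_mul, Nat.factorial]
  push_cast
  module

theorem lumpingStencil_smul_sub_isBigO (f : smoothMaps E F) (p v : E) :
    (fun h : ℝ ↦ lumpingStencil f p (h • v)
        - ((1 / 2 : ℝ) • f p - (h ^ 4 / 12) • (dirDeriv v ^ 4) f p)) =O[𝓝 0] fun h ↦ h ^ 6 := by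
  have hline : ContDiff ℝ 6 fun s : ℝ ↦ f (p + s • v) :=
    (contDiff_infty.1 (smoothMaps.contDiff f) 6).comp (by fun_prop)
  refine (lumpingStencil_sub_isBigO hline 0).congr_left fun h ↦ ?_
  simp [lumpingStencil, iteratedDeriv_comp_add_smul, sub_eq_add_neg, mul_smul]

end Stencil

section MassLumping

theorem I2_eq_lumpingStencil_add (γ : ℝ) (Q : ℝ × ℝ → ℂ) (x z h : ℝ) :
    I2 γ Q x z h = lumpingStencil Q (x, z) (h • (1, 0)) + lumpingStencil Q (x, z) (h • (0, γ)) := by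
  simp only [I2, lumpingStencil, Prod.smul_mk, Prod.mk_sub_mk, Prod.mk_add_mk, smul_eq_mul,
    mul_comm h, one_mul, zero_mul, mul_zero, sub_zero, add_zero, ← mul_assoc, Complex.real_smul]
  push_cast
  ring

theorem I3_eq_lumpingStencil_add (γ : ℝ) (Q : ℝ × ℝ → ℂ) (x z h : ℝ) :
    I3 γ Q x z h
      = lumpingStencil Q (x, z) (h • (1, γ)) + lumpingStencil Q (x, z) (h • (1, -γ)) := by
  simp only [I3, lumpingStencil, Prod.smul_mk, Prod.mk_sub_mk, Prod.mk_add_mk, smul_eq_mul,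
    mul_comm h, one_mul, neg_mul, mul_neg, sub_neg_eq_add, ← sub_eq_add_neg, ← mul_assoc,
    Complex.real_smul]
  push_cast
  ring

variable (γ : ℝ) (Q : smoothMaps (ℝ × ℝ) ℂ) (x z : ℝ)

theorem Dx4_eq_dirDeriv_pow : Dx4 Q x z = (dirDeriv (1, 0) ^ 4) Q (x, z) :=
  iteratedDeriv_comp_prodMk_right 4 Q x z

theorem Dz4_eq_dirDeriv_pow : Dz4 Q x z = (dirDeriv (0, 1) ^ 4) Q (x, z) :=
  iteratedDeriv_comp_prodMk_left 4 Q x z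

theorem Dx2z2_eq_dirDeriv_pow :
    Dx2z2 Q x z = (dirDeriv (1, 0) ^ 2) ((dirDeriv (0, 1) ^ 2) Q) (x, z) := by
  simp only [Dx2z2, iteratedDeriv_comp_prodMk_left, iteratedDeriv_comp_prodMk_right]

theorem dirDeriv_diagonals_pow_four :
    (dirDeriv (1, γ) ^ 4) Q (x, z) + (dirDeriv (1, -γ) ^ 4) Q (x, z)
      = 2 * Dx4 Q x z + 12 * (γ : ℂ) ^ 2 * Dx2z2 Q x z + 2 * (γ : ℂ) ^ 4 * Dz4 Q x z := by
  have hadd : ((1, γ) : ℝ × ℝ) = (1, 0) + (0, γ) := by simp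
  have hsub : ((1, -γ) : ℝ × ℝ) = (1, 0) - (0, γ) := by simp
  rw [Dx4_eq_dirDeriv_pow, Dz4_eq_dirDeriv_pow, Dx2z2_eq_dirDeriv_pow, hadd, hsub,
    dirDeriv_add_pow_four_add_dirDeriv_sub_pow_four, dirDeriv_zero_prodMk]
  simp only [smul_pow, LinearMap.smul_apply, map_smul, SetLike.val_smul, Pi.smul_apply,
    Complex.real_smul, nsmul_eq_mul]
  push_cast
  ring

theorem I2_sub_isBigO :
    (fun h : ℝ ↦ I2 γ Q x z h - (Q (x, z)
        - (h : ℂ) ^ 4 / 12 * (Dx4 Q x z + (γ : ℂ) ^ 4 * Dz4 Q x z))) =O[𝓝 0] fun h ↦ h ^ 6 := by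
  refine ((lumpingStencil_smul_sub_isBigO Q (x, z) (1, 0)).add
    (lumpingStencil_smul_sub_isBigO Q (x, z) (0, γ))).congr_left fun h ↦ ?_
  rw [I2_eq_lumpingStencil_add, Dx4_eq_dirDeriv_pow, Dz4_eq_dirDeriv_pow, dirDeriv_zero_prodMk]
  simp only [smul_pow, LinearMap.smul_apply, SetLike.val_smul, Pi.smul_apply, Complex.real_smul]
  push_cast
  ring

theorem I3_sub_isBigO :
    (fun h : ℝ ↦ I3 γ Q x z h - (Q (x, z)
        - (h : ℂ) ^ 4 / 6 * (Dx4 Q x z + 6 * (γ : ℂ) ^ 2 * Dx2z2 Q x z + (γ : ℂ) ^ 4 * Dz4 Q x z)))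
      =O[𝓝 0] fun h ↦ h ^ 6 := by
  refine ((lumpingStencil_smul_sub_isBigO Q (x, z) (1, γ)).add
    (lumpingStencil_smul_sub_isBigO Q (x, z) (1, -γ))).congr_left fun h ↦ ?_
  have hdiag := dirDeriv_diagonals_pow_four γ Q x z
  rw [I3_eq_lumpingStencil_add]
  simp only [Complex.real_smul]
  push_cast
  linear_combination (h : ℂ) ^ 4 / 12 * hdiag

end MassLumping

/-- expansion of the weighted mass-lumping operator Ĩ of the
point-weighting 17-point scheme. -/
theorem Itilde_expansion
    (γ : ℝ) (hγ : 0 < γ) (d₁ d₂ d₃ : ℝ) (hd : d₁ + d₂ + d₃ = 1)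
    (Q : ℝ × ℝ → ℂ) (hQ : ContDiff ℝ (⊤ : ℕ∞) Q) (x z : ℝ) :
    ∃ C δ : ℝ, 0 < C ∧ 0 < δ ∧ ∀ h : ℝ, 0 < h → h < δ →
      ‖Itilde γ d₁ d₂ d₃ Q x z h - (Q (x, z)
          - (h : ℂ) ^ 4 * ((((d₂ : ℂ) + 2 * (d₃ : ℂ)) / 12)
                * (Dx4 Q x z + (γ : ℂ) ^ 4 * Dz4 Q x z)
              + (d₃ : ℂ) * (γ : ℂ) ^ 2 * Dx2z2 Q x z))‖ ≤ C * h ^ 6 := by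
  lift Q to smoothMaps (ℝ × ℝ) ℂ using hQ
  have hd' : (d₁ + d₂ + d₃ : ℂ) = 1 := mod_cast hd
  have hcomb := ((I2_sub_isBigO γ Q x z).const_mul_left (d₂ : ℂ)).add
    ((I3_sub_isBigO γ Q x z).const_mul_left (d₃ : ℂ))
  refine exists_norm_le_of_isBigO_pow ((hcomb.mono nhdsWithin_le_nhds).congr_left fun h ↦ ?_)
  rw [Itilde]
  linear_combination -Q (x, z) * hd'

end
end
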